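/- Let z₁ < ⋯ < z_K (K ≥ 2) be a grid with Cramér projection Π_C. For any probability measure ν on ℝ supported on [z₁, z_K], the projection preserves the mean: ∫_ℝ x d(Π_C ν)(x) = ∫_ℝ x dν(x). -/

import Mathlib

open MeasureTheory Filter Set

noncomputable section

/-- The cumulative distribution function of a measure on ℝ. -/
def cdfFn (ν : Measure ℝ) (y : ℝ) : ℝ := (ν (Set.Iic y)).toReal

/-- The Cramér distance `ℓ₂` between two measures on ℝ. -/
def cramerDist (ν₁ ν₂ : Measure ℝ) : ℝ :=
  Real.sqrt (∫ x, (cdfFn ν₁ x - cdfFn ν₂ x) ^ 2)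

/-- The hat functions associated with the grid `z 0 < z 1 < ⋯ < z (K-1)`. -/
def hatFn (K : ℕ) (z : ℕ → ℝ) (i : ℕ) (x : ℝ) : ℝ :=
  if i = 0 ∧ x ≤ z 0 then 1
  else if i = K - 1 ∧ z (K - 1) ≤ x then 1
  else if i + 1 < K ∧ z i ≤ x ∧ x ≤ z (i + 1) then (z (i + 1) - x) / (z (i + 1) - z i)
  else if 0 < i ∧ z (i - 1) ≤ x ∧ x ≤ z i then (x - z (i - 1)) / (z i - z (i - 1))
  else 0

/-- The Cramér projection onto the grid `z 0 < z 1 < ⋯ < z (K-1)`. -/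
def cramerProj (K : ℕ) (z : ℕ → ℝ) (ν : Measure ℝ) : Measure ℝ :=
  ∑ i ∈ Finset.range K, (ENNReal.ofReal (∫ w, hatFn K z i w ∂ν)) • Measure.dirac (z i)

/-- The distributional Bellman operator. -/
def bellmanOp {X A : Type} [Fintype X] [Fintype A] [MeasurableSpace X] [MeasurableSpace A]
    (γ : ℝ) (p : X × A → Measure (ℝ × X)) (pol : X → Measure A)
    (η : X × A → Measure ℝ) (xa : X × A) : Measure ℝ :=
  (p xa).bind (fun rx' => ∑ a' : A, (pol rx'.2 {a'}) • (η (rx'.2, a')).map (fun t => rx'.1 + γ * t))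

/-- The supremum-Cramér metric between return distribution functions. -/
def supCramer {X A : Type} [Fintype X] [Fintype A] (η μ : X × A → Measure ℝ) : ℝ :=
  ⨆ xa : X × A, cramerDist (η xa) (μ xa)

/-- Square-integrable tails of the CDF. -/
def sqIntTails (ν : Measure ℝ) : Prop :=
  IntegrableOn (fun x => (cdfFn ν x) ^ 2) (Set.Iic 0) ∧
  IntegrableOn (fun x => (1 - cdfFn ν x) ^ 2) (Set.Ici 0)

/-!
Integrating `f` against `Π_C ν` is integrating the interpolant `∑ i, h_{z_i} • f (z_i)` against `ν`.
On a grid cell the interpolant is affine with the same endpoint values as `f`, and it is constant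
beyond the two ends of the grid. For `f = id` it is therefore the clamping of `x` to `[z₁, z_K]`,
which is the identity on the support of `ν`.
-/

theorem exists_lt_mem_Ioc_succ {α : Type*} [LinearOrder α] {u : ℕ → α} {n : ℕ} {x : α}
    (hx : x ∈ Ioc (u 0) (u n)) : ∃ j < n, x ∈ Ioc (u j) (u (j + 1)) := by
  obtain ⟨j, hj, hsucc⟩ :=
    Nat.exists_not_and_succ_of_not_zero_of_exists (p := fun m => m ≤ n → x ≤ u m)
      (fun h => (h n.zero_le).not_gt hx.1) ⟨n, fun _ => hx.2⟩
  obtain ⟨hjn, hjx⟩ : j ≤ n ∧ u j < x := by simpa only [Classical.not_imp, not_le] using hj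
  have hlt : j < n := hjn.lt_of_ne fun h => (h ▸ hjx).not_ge hx.2
  exact ⟨j, hlt, hjx, hsucc hlt⟩

section HatFunctions

variable {K : ℕ} {z : ℕ → ℝ} {i j : ℕ} {x : ℝ}

theorem hatFn_mem_Icc (K : ℕ) (z : ℕ → ℝ) (i : ℕ) (x : ℝ) : hatFn K z i x ∈ Icc 0 1 := by
  unfold hatFn
  split_ifs with _ _ hright hleft
  · exact right_mem_Icc.2 zero_le_one
  · exact right_mem_Icc.2 zero_le_one
  · obtain ⟨-, hzx, hxz⟩ := hright
    exact ⟨div_nonneg (by linarith) (by linarith), div_le_one_of_le₀ (by linarith) (by linarith)⟩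
  · obtain ⟨-, hzx, hxz⟩ := hleft
    exact ⟨div_nonneg (by linarith) (by linarith), div_le_one_of_le₀ (by linarith) (by linarith)⟩
  · exact left_mem_Icc.2 zero_le_one

theorem measurable_hatFn (K : ℕ) (z : ℕ → ℝ) (i : ℕ) : Measurable (hatFn K z i) := by
  unfold hatFn
  refine .ite ?_ measurable_const <| .ite ?_ measurable_const <|
    .ite ?_ (by fun_prop) <| .ite ?_ (by fun_prop) measurable_const
  · exact (MeasurableSet.const _).inter measurableSet_Iic
  · exact (MeasurableSet.const _).inter measurableSet_Ici
  · exact (MeasurableSet.const _).inter measurableSet_Icc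
  · exact (MeasurableSet.const _).inter measurableSet_Icc

theorem integrable_hatFn (K : ℕ) (z : ℕ → ℝ) (i : ℕ) (ν : Measure ℝ) [IsFiniteMeasure ν] :
    Integrable (hatFn K z i) ν :=
  .of_mem_Icc 0 1 (measurable_hatFn K z i).aemeasurable (.of_forall (hatFn_mem_Icc K z i))

theorem hatFn_zero_of_le (hx : x ≤ z 0) : hatFn K z 0 x = 1 :=
  if_pos ⟨rfl, hx⟩

theorem hatFn_last_of_le (hx : z (K - 1) ≤ x) : hatFn K z (K - 1) x = 1 := by
  unfold hatFn
  rw [if_pos (c := K - 1 = K - 1 ∧ z (K - 1) ≤ x) ⟨rfl, hx⟩, ite_self]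

theorem hatFn_of_mem_Icc (hj : j + 1 < K) (hlt : z j < z (j + 1))
    (hx : x ∈ Icc (z j) (z (j + 1))) :
    hatFn K z j x = (z (j + 1) - x) / (z (j + 1) - z j) := by
  unfold hatFn
  split_ifs with hfirst hlast hright
  · obtain ⟨rfl, hx0⟩ := hfirst
    rw [hx0.antisymm hx.1, div_self (sub_pos.2 hlt).ne']
  · omega
  · rfl
  all_goals exact absurd ⟨hj, hx⟩ hright

theorem hatFn_succ_of_mem_Icc (hz : StrictMonoOn z (Iio K)) (hj : j + 1 < K)
    (hx : x ∈ Icc (z j) (z (j + 1))) :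
    hatFn K z (j + 1) x = (x - z j) / (z (j + 1) - z j) := by
  have hlt : z j < z (j + 1) := hz (mem_Iio.2 (by omega)) hj j.lt_succ_self
  unfold hatFn
  rw [if_neg fun hfirst => j.succ_ne_zero hfirst.1]
  split_ifs with hlast hright hleft
  · have hxz : x = z (j + 1) := hx.2.antisymm (hlast.1 ▸ hlast.2)
    rw [hxz, div_self (sub_pos.2 hlt).ne']
  · have hxz : x = z (j + 1) := hx.2.antisymm hright.2.1
    have hlt' : z (j + 1) < z (j + 1 + 1) := hz hj hright.1 (j + 1).lt_succ_self
    rw [hxz, div_self (sub_pos.2 hlt).ne', div_self (sub_pos.2 hlt').ne']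
  · rfl
  · exact absurd ⟨j.succ_pos, hx⟩ hleft

theorem hatFn_eq_zero_of_lt_of_le (hz : StrictMonoOn z (Iio K)) (hij : i < j) (hj : j < K)
    (hx : z j ≤ x) : hatFn K z i x = 0 := by
  have hlt : z i < z j := hz (hij.trans hj) hj hij
  unfold hatFn
  split_ifs with hfirst hlast hright hleft
  · obtain ⟨rfl, hx0⟩ := hfirst
    linarith
  · omega
  · have hle : z (i + 1) ≤ z j := hz.monotoneOn hright.1 hj hij
    rw [hright.2.2.antisymm (hle.trans hx), sub_self, zero_div]
  · linarith [hleft.2.2]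
  · rfl

theorem hatFn_eq_zero_of_gt_of_le (hz : StrictMonoOn z (Iio K)) (hji : j < i) (hi : i < K)
    (hx : x ≤ z j) : hatFn K z i x = 0 := by
  have hlt : z j < z i := hz (hji.trans hi) hi hji
  unfold hatFn
  split_ifs with hfirst hlast hright hleft
  · omega
  · obtain ⟨rfl, hxlast⟩ := hlast
    linarith
  · linarith [hright.2.1]
  · have hle : z j ≤ z (i - 1) :=
      hz.monotoneOn (hji.trans hi) (mem_Iio.2 (by omega)) (Nat.le_sub_one_of_lt hji)
    rw [(hx.trans hle).antisymm hleft.2.1, sub_self, zero_div]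
  · rfl

end HatFunctions

section Interpolation

variable {E : Type*} [AddCommMonoid E] [Module ℝ E] {K : ℕ} {z : ℕ → ℝ} {j : ℕ} {x : ℝ}

theorem sum_hatFn_smul_of_le_first (hK : 0 < K) (hz : StrictMonoOn z (Iio K)) (v : ℕ → E)
    (hx : x ≤ z 0) : ∑ i ∈ Finset.range K, hatFn K z i x • v i = v 0 := by
  rw [Finset.sum_eq_single_of_mem 0 (Finset.mem_range.2 hK), hatFn_zero_of_le hx, one_smul]
  intro i hi hi0
  rw [hatFn_eq_zero_of_gt_of_le hz (Nat.pos_of_ne_zero hi0) (Finset.mem_range.1 hi) hx, zero_smul]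

theorem sum_hatFn_smul_of_last_le (hK : 0 < K) (hz : StrictMonoOn z (Iio K)) (v : ℕ → E)
    (hx : z (K - 1) ≤ x) : ∑ i ∈ Finset.range K, hatFn K z i x • v i = v (K - 1) := by
  have hlast : K - 1 < K := Nat.sub_one_lt_of_lt hK
  rw [Finset.sum_eq_single_of_mem (K - 1) (Finset.mem_range.2 hlast), hatFn_last_of_le hx, one_smul]
  intro i hi hilast
  have hlt : i < K - 1 := (Nat.le_sub_one_of_lt (Finset.mem_range.1 hi)).lt_of_ne hilast
  rw [hatFn_eq_zero_of_lt_of_le hz hlt hlast hx, zero_smul]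

theorem sum_hatFn_smul_of_mem_Icc (hz : StrictMonoOn z (Iio K)) (v : ℕ → E) (hj : j + 1 < K)
    (hx : x ∈ Icc (z j) (z (j + 1))) :
    ∑ i ∈ Finset.range K, hatFn K z i x • v i =
      ((z (j + 1) - x) / (z (j + 1) - z j)) • v j +
        ((x - z j) / (z (j + 1) - z j)) • v (j + 1) := by
  have hjK : j < K := j.lt_succ_self.trans hj
  rw [Finset.sum_eq_add_of_mem j (j + 1) (Finset.mem_range.2 hjK) (Finset.mem_range.2 hj)
      j.lt_succ_self.ne, hatFn_of_mem_Icc hj (hz hjK hj j.lt_succ_self) hx,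
    hatFn_succ_of_mem_Icc hz hj hx]
  rintro i hi ⟨hij, hij'⟩
  obtain hlt | hlt : i < j ∨ j + 1 < i := by omega
  · rw [hatFn_eq_zero_of_lt_of_le hz hlt hjK hx.1, zero_smul]
  · rw [hatFn_eq_zero_of_gt_of_le hz hlt (Finset.mem_range.1 hi) hx.2, zero_smul]

end Interpolation

theorem sum_hatFn_smul_grid {K : ℕ} (hK : 0 < K) {z : ℕ → ℝ}
    (hz : StrictMonoOn z (Iio K)) (x : ℝ) :
    ∑ i ∈ Finset.range K, hatFn K z i x • z i = max (z 0) (min (z (K - 1)) x) := by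
  have hlast : K - 1 < K := Nat.sub_one_lt_of_lt hK
  rcases le_or_gt x (z 0) with hx0 | hx0
  · rw [sum_hatFn_smul_of_le_first hK hz z hx0, max_eq_left (min_le_of_right_le hx0)]
  rcases le_total (z (K - 1)) x with hxlast | hxlast
  · rw [sum_hatFn_smul_of_last_le hK hz z hxlast, min_eq_left hxlast,
      max_eq_right (hz.monotoneOn hK hlast (Nat.zero_le _))]
  · obtain ⟨j, hj, hx⟩ := exists_lt_mem_Ioc_succ ⟨hx0, hxlast⟩
    have hjK : j + 1 < K := Nat.add_lt_of_lt_sub hj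
    have hne : z (j + 1) - z j ≠ 0 := sub_ne_zero_of_ne (hx.1.trans_le hx.2).ne'
    rw [min_eq_right hxlast, max_eq_right hx0.le,
      sum_hatFn_smul_of_mem_Icc hz z hjK (Ioc_subset_Icc_self hx), smul_eq_mul, smul_eq_mul]
    field_simp
    ring

theorem integral_cramerProj {E : Type*} [NormedAddCommGroup E] [NormedSpace ℝ E] [CompleteSpace E]
    (K : ℕ) (z : ℕ → ℝ) (ν : Measure ℝ) [IsFiniteMeasure ν] (f : ℝ → E) :
    ∫ x, f x ∂(cramerProj K z ν) =
      ∫ x, ∑ i ∈ Finset.range K, hatFn K z i x • f (z i) ∂ν := by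
  have hatom : ∀ i, ∫ x, f x ∂(ENNReal.ofReal (∫ w, hatFn K z i w ∂ν) • Measure.dirac (z i)) =
      ∫ x, hatFn K z i x • f (z i) ∂ν := fun i => by
    rw [integral_smul_measure, integral_dirac, integral_smul_const,
      ENNReal.toReal_ofReal (integral_nonneg fun x => (hatFn_mem_Icc K z i x).1)]
  unfold cramerProj
  rw [integral_finsetSum_measure fun i _ =>
      (integrable_dirac enorm_lt_top).smul_measure ENNReal.ofReal_ne_top,
    integral_finsetSum _ fun i _ => (integrable_hatFn K z i ν).smul_const _]
  exact Finset.sum_congr rfl fun i _ => hatom i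

theorem cramerProj_preserves_mean_general (K : ℕ) (hK : 0 < K) (z : ℕ → ℝ)
    (hz : StrictMonoOn z (Iio K)) (ν : Measure ℝ) [IsFiniteMeasure ν] :
    ∫ x, x ∂(cramerProj K z ν) = ∫ x, max (z 0) (min (z (K - 1)) x) ∂ν := by
  simp only [integral_cramerProj, sum_hatFn_smul_grid hK hz]

/-- The Cramér projection preserves the mean of measures supported
on [z₁, z_K]. -/
theorem cramerProj_preserves_mean
    (K : ℕ) (hK : 2 ≤ K) (z : ℕ → ℝ) (hz : ∀ i, i + 1 < K → z i < z (i + 1))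
    (ν : Measure ℝ) [IsProbabilityMeasure ν] (hν : ν (Set.Icc (z 0) (z (K - 1)))ᶜ = 0) :
    ∫ x, x ∂(cramerProj K z ν) = ∫ x, x ∂ν := by
  have hsupp : ∀ᵐ x ∂ν, x ∈ Icc (z 0) (z (K - 1)) := hν
  rw [cramerProj_preserves_mean_general K (by omega) z
    (strictMonoOn_of_lt_add_one ordConnected_Iio fun i _ _ => hz i) ν]
  refine integral_congr_ae ?_
  filter_upwards [hsupp] with x hx
  rw [min_eq_right hx.2, max_eq_right hx.1]

end
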